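/- Let G be the free group on generators a_1,…,a_n and let φ : G → G be an endomorphism with remnant such that |Rem_φ a_i| > 1 for every generator a_i. Set l = min_i (|Rem_φ a_i| − 1) > 0. Then for all u, v ∈ G: there exists z ∈ G with v = φ(z)·u·z⁻¹ if and only if there exists z ∈ G with |z| ≤ (|u| + |v|)/l and v = φ(z)·u·z⁻¹. In particular, singly-twisted conjugacy of u and v with respect to φ is decided by checking the finitely many z of length at most (|u| + |v|)/l. -/

import Mathlib

/-- Half the total cancellation in the product `x * y` of elements of a free group:
`(|x| + |y| - |x*y|) / 2`. -/
def cancelLen {β : Type} [DecidableEq β] (x y : FreeGroup β) : ℕ :=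
  (FreeGroup.norm x + FreeGroup.norm y - FreeGroup.norm (x * y)) / 2

/-- `x` or `x⁻¹`, according to the sign `b` (`true` = exponent `1`, `false` = exponent `-1`). -/
def pmPow {β : Type} [DecidableEq β] (b : Bool) (x : FreeGroup β) : FreeGroup β :=
  if b then x else x⁻¹

/-- The left cancellation `L_i` of the `i`-th entry of the tuple `t`: the maximum of
`(|h_j^α| + |h_i| - |h_j^α * h_i|)/2` over pairs `(j, α)` with `(j, α) ≠ (i, -1)`. -/
def leftCancel {β : Type} [DecidableEq β] {N : ℕ} (t : Fin N → FreeGroup β) (i : Fin N) : ℕ :=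
  Finset.univ.sup fun p : Fin N × Bool =>
    if p.1 = i ∧ p.2 = false then 0 else cancelLen (pmPow p.2 (t p.1)) (t i)

/-- The right cancellation `R_i` of the `i`-th entry of the tuple `t`: the maximum of
`(|h_i| + |h_k^β| - |h_i * h_k^β|)/2` over pairs `(k, β)` with `(k, β) ≠ (i, -1)`. -/
def rightCancel {β : Type} [DecidableEq β] {N : ℕ} (t : Fin N → FreeGroup β) (i : Fin N) : ℕ :=
  Finset.univ.sup fun p : Fin N × Bool =>
    if p.1 = i ∧ p.2 = false then 0 else cancelLen (t i) (pmPow p.2 (t p.1))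

/-- The remnant length `|Rem_t h_i| = |h_i| - L_i - R_i` of the `i`-th entry of `t`. -/
def remLen {β : Type} [DecidableEq β] {N : ℕ} (t : Fin N → FreeGroup β) (i : Fin N) : ℕ :=
  FreeGroup.norm (t i) - leftCancel t i - rightCancel t i

/-- A tuple has remnant if `|h_i| - L_i - R_i ≥ 1` for all `i`. -/
def HasRemnant {β : Type} [DecidableEq β] {N : ℕ} (t : Fin N → FreeGroup β) : Prop :=
  ∀ i, 1 ≤ remLen t i

def lcpL {γ : Type} [DecidableEq γ] : List γ → List γ → ℕ
  | [], _ => 0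
  | _ :: _, [] => 0
  | a :: s, b :: t => if a = b then lcpL s t + 1 else 0

theorem lcpL_ultra {γ : Type} [DecidableEq γ] : ∀ (A B C : List γ),
    lcpL A C ≤ lcpL A B ∨ lcpL C B ≤ lcpL A B
  | [], _, _ => by simp [lcpL]
  | _ :: _, [], C => by cases C <;> simp [lcpL]
  | _ :: _, _ :: _, [] => by simp [lcpL]
  | a :: s, b :: t, c :: r => by
    have ih := lcpL_ultra s t r
    simp only [lcpL]
    split_ifs <;> first | omega | (exfalso; simp_all)

theorem invRev_isReduced {β : Type} [DecidableEq β] {L : List (β × Bool)}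
    (h : FreeGroup.IsReduced L) : FreeGroup.IsReduced (FreeGroup.invRev L) := by
  rw [FreeGroup.isReduced_iff_reduce_eq] at h ⊢
  rw [FreeGroup.reduce_invRev, h]

theorem norm_mk_red {β : Type} [DecidableEq β] {L : List (β × Bool)}
    (h : FreeGroup.IsReduced L) : (FreeGroup.mk L).norm = L.length := by
  rw [FreeGroup.norm, FreeGroup.toWord_mk, h.reduce_eq]

theorem norm_lcp_list {β : Type} [DecidableEq β] : ∀ (A B : List (β × Bool)),
    FreeGroup.IsReduced A → FreeGroup.IsReduced B →
    ((FreeGroup.mk A)⁻¹ * FreeGroup.mk B).norm + 2 * lcpL A B = A.length + B.length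
  | [], B => fun _ hB => by
    have : (FreeGroup.mk ([] : List (β × Bool))) = 1 := rfl
    simp [lcpL, this, norm_mk_red hB]
  | a :: s, [] => fun hA _ => by
    have : (FreeGroup.mk ([] : List (β × Bool))) = 1 := rfl
    simp only [lcpL, this, mul_one, FreeGroup.norm_inv_eq, norm_mk_red hA]
    simp
  | a :: s, b :: t => fun hA hB => by
    by_cases hab : a = b
    · subst hab
      have ih := norm_lcp_list s t (List.IsChain.tail hA) (List.IsChain.tail hB)
      have e : (FreeGroup.mk (a :: s))⁻¹ * FreeGroup.mk (a :: t)
          = (FreeGroup.mk s)⁻¹ * FreeGroup.mk t := by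
        have h1 : FreeGroup.mk (a :: s) = FreeGroup.mk [a] * FreeGroup.mk s := by
          rw [FreeGroup.mul_mk]; rfl
        have h2 : FreeGroup.mk (a :: t) = FreeGroup.mk [a] * FreeGroup.mk t := by
          rw [FreeGroup.mul_mk]; rfl
        rw [h1, h2]; group
      rw [e]
      simp only [lcpL, if_true, List.length_cons]
      omega
    · rw [FreeGroup.inv_mk, FreeGroup.mul_mk, norm_mk_red]
      · simp [lcpL, hab, FreeGroup.invRev_length]
      · refine List.isChain_append.2 ⟨invRev_isReduced hA, hB, ?_⟩
        intro x hx y hy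
        simp [FreeGroup.invRev] at hx hy
        subst hx hy
        intro h1
        simp only at h1
        obtain ⟨a1, a2⟩ := a
        obtain ⟨b1, b2⟩ := b
        simp only at h1
        subst h1
        cases a2 <;> cases b2 <;> simp_all

theorem norm_lcp {β : Type} [DecidableEq β] (x y : FreeGroup β) :
    (x⁻¹ * y).norm + 2 * lcpL x.toWord y.toWord = x.norm + y.norm := by
  have := norm_lcp_list x.toWord y.toWord FreeGroup.isReduced_toWord FreeGroup.isReduced_toWord
  simpa [FreeGroup.mk_toWord, FreeGroup.norm] using this

theorem cancelLen_lcp {β : Type} [DecidableEq β] (x y : FreeGroup β) :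
    cancelLen x y = lcpL (x⁻¹).toWord y.toWord := by
  have := norm_lcp x⁻¹ y
  rw [inv_inv, FreeGroup.norm_inv_eq] at this
  unfold cancelLen
  omega

theorem norm_cancel {β : Type} [DecidableEq β] (x y : FreeGroup β) :
    (x * y).norm + 2 * cancelLen x y = x.norm + y.norm := by
  have := norm_lcp x⁻¹ y
  rw [inv_inv, FreeGroup.norm_inv_eq] at this
  rw [cancelLen_lcp]
  omega

theorem cancelLen_symm {β : Type} [DecidableEq β] (x y : FreeGroup β) :
    cancelLen y⁻¹ x⁻¹ = cancelLen x y := by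
  unfold cancelLen
  rw [← mul_inv_rev]
  simp only [FreeGroup.norm_inv_eq]
  rw [add_comm]

theorem cancel_step {β : Type} [DecidableEq β] (k h q : FreeGroup β)
    (hh : cancelLen k h + cancelLen h q < h.norm) :
    cancelLen k (h * q) ≤ cancelLen k h := by
  have h1 := norm_lcp (h * q) h
  have e : (h * q)⁻¹ * h = q⁻¹ := by group
  rw [e, FreeGroup.norm_inv_eq] at h1
  have h2 := norm_cancel h q
  have h3 := lcpL_ultra (k⁻¹).toWord h.toWord (h * q).toWord
  rw [← cancelLen_lcp, ← cancelLen_lcp] at h3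
  omega

def letL {β : Type} [DecidableEq β] {N : ℕ} (t : Fin N → FreeGroup β) (p : Fin N × Bool) : ℕ :=
  if p.2 then leftCancel t p.1 else rightCancel t p.1

def letR {β : Type} [DecidableEq β] {N : ℕ} (t : Fin N → FreeGroup β) (p : Fin N × Bool) : ℕ :=
  if p.2 then rightCancel t p.1 else leftCancel t p.1

theorem le_left {β : Type} [DecidableEq β] {N : ℕ} (t : Fin N → FreeGroup β) (i : Fin N)
    (p : Fin N × Bool) (hp : ¬ (p.1 = i ∧ p.2 = false)) :
    cancelLen (pmPow p.2 (t p.1)) (t i) ≤ leftCancel t i := by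
  have := Finset.le_sup (f := fun p : Fin N × Bool =>
    if p.1 = i ∧ p.2 = false then 0 else cancelLen (pmPow p.2 (t p.1)) (t i)) (Finset.mem_univ p)
  simp only [if_neg hp] at this
  exact this

theorem le_right {β : Type} [DecidableEq β] {N : ℕ} (t : Fin N → FreeGroup β) (i : Fin N)
    (p : Fin N × Bool) (hp : ¬ (p.1 = i ∧ p.2 = false)) :
    cancelLen (t i) (pmPow p.2 (t p.1)) ≤ rightCancel t i := by
  have := Finset.le_sup (f := fun p : Fin N × Bool =>
    if p.1 = i ∧ p.2 = false then 0 else cancelLen (t i) (pmPow p.2 (t p.1))) (Finset.mem_univ p)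
  simp only [if_neg hp] at this
  exact this

theorem pm_inv {β : Type} [DecidableEq β] (b : Bool) (x : FreeGroup β) :
    (pmPow b x)⁻¹ = pmPow (!b) x := by
  cases b <;> simp [pmPow]

theorem cross_L {β : Type} [DecidableEq β] {N : ℕ} (t : Fin N → FreeGroup β)
    (p q : Fin N × Bool) (h : p.1 = q.1 → p.2 = q.2) :
    cancelLen (pmPow p.2 (t p.1)) (pmPow q.2 (t q.1)) ≤ letL t q := by
  obtain ⟨i, b⟩ := p
  obtain ⟨j, c⟩ := q
  cases c
  · have := le_right t j (i, !b) (by simpa using h)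
    rw [← cancelLen_symm, pm_inv, pm_inv]
    simpa [letL, pmPow] using this
  · have := le_left t j (i, b) (by simpa using h)
    simpa [letL, pmPow] using this

theorem cross_R {β : Type} [DecidableEq β] {N : ℕ} (t : Fin N → FreeGroup β)
    (p q : Fin N × Bool) (h : p.1 = q.1 → p.2 = q.2) :
    cancelLen (pmPow p.2 (t p.1)) (pmPow q.2 (t q.1)) ≤ letR t p := by
  have := cross_L t (q.1, !q.2) (p.1, !p.2) (by simp; intro h'; exact (h h'.symm).symm)
  simp only [← pm_inv] at this
  rw [cancelLen_symm] at this
  refine this.trans ?_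
  obtain ⟨i, b⟩ := p
  cases b <;> simp [letL, letR]

theorem main_bound {N : ℕ} {β : Type} [DecidableEq β] (φ : FreeGroup (Fin N) →* FreeGroup β)
    (m : ℕ) (hm0 : 0 < m) (hm : ∀ i, m ≤ remLen (fun j => φ (FreeGroup.of j)) i) :
    ∀ (L : List (Fin N × Bool)) (x : Fin N × Bool), FreeGroup.IsReduced (x :: L) →
      (m * (L.length + 1) + letL (fun j => φ (FreeGroup.of j)) x
        ≤ (φ (FreeGroup.mk (x :: L))).norm) ∧
      (∀ y : Fin N × Bool, (y.1 = x.1 → y.2 = x.2) →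
        cancelLen (pmPow y.2 (φ (FreeGroup.of y.1))) (φ (FreeGroup.mk (x :: L)))
          ≤ cancelLen (pmPow y.2 (φ (FreeGroup.of y.1))) (pmPow x.2 (φ (FreeGroup.of x.1)))) := by
  have hx1 : ∀ x : Fin N × Bool, φ (FreeGroup.mk [x]) = pmPow x.2 (φ (FreeGroup.of x.1)) := by
    rintro ⟨i, b⟩
    cases b
    · have : FreeGroup.mk [(i, false)] = (FreeGroup.of i)⁻¹ := rfl
      simp [pmPow, this]
    · rfl
  have hlen : ∀ x : Fin N × Bool, m + letL (fun j => φ (FreeGroup.of j)) x +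
      letR (fun j => φ (FreeGroup.of j)) x ≤ (pmPow x.2 (φ (FreeGroup.of x.1))).norm := by
    rintro ⟨i, b⟩
    have := hm i
    unfold remLen at this
    beta_reduce at this
    cases b <;> simp [letL, letR, pmPow, FreeGroup.norm_inv_eq] <;> omega
  intro L
  induction L with
  | nil =>
    intro x _
    rw [hx1]
    refine ⟨?_, fun y _ => le_rfl⟩
    have := hlen x
    simp
    omega
  | cons w L ih =>
    intro x hr
    have hr' := FreeGroup.isReduced_cons_cons.1 hr
    obtain ⟨i1, i2⟩ := ih w hr'.2
    have e : φ (FreeGroup.mk (x :: w :: L)) =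
        pmPow x.2 (φ (FreeGroup.of x.1)) * φ (FreeGroup.mk (w :: L)) := by
      rw [← hx1, ← map_mul, FreeGroup.mul_mk]; rfl
    have c1 := i2 x hr'.1
    have c2 := cross_L (fun j => φ (FreeGroup.of j)) x w hr'.1
    have c3 := cross_R (fun j => φ (FreeGroup.of j)) x w hr'.1
    have hl := hlen x
    rw [e]
    constructor
    · have := norm_cancel (pmPow x.2 (φ (FreeGroup.of x.1))) (φ (FreeGroup.mk (w :: L)))
      simp only [List.length_cons]
      have : m * (L.length + 1 + 1) = m * (L.length + 1) + m := by ring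
      omega
    · intro y hy
      apply cancel_step
      have c4 := cross_L (fun j => φ (FreeGroup.of j)) y x hy
      omega

theorem norm_bound {N : ℕ} {β : Type} [DecidableEq β] (φ : FreeGroup (Fin N) →* FreeGroup β)
    (m : ℕ) (hm0 : 0 < m) (hm : ∀ i, m ≤ remLen (fun j => φ (FreeGroup.of j)) i)
    (z : FreeGroup (Fin N)) : m * z.norm ≤ (φ z).norm := by
  have hz : FreeGroup.mk z.toWord = z := FreeGroup.mk_toWord
  have hr : FreeGroup.IsReduced z.toWord := FreeGroup.isReduced_toWord
  unfold FreeGroup.norm at *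
  rcases h : z.toWord with _ | ⟨x, L⟩
  · simp
  · rw [h] at hz hr
    have := (main_bound φ m hm0 hm L x hr).1
    rw [hz] at this
    unfold FreeGroup.norm at this
    simp only [List.length_cons]
    omega

/-- Let `φ` be an endomorphism of the free group on `n` generators
with remnant such that `|Rem_φ a_i| > 1` for every generator, and set
`l = min_i (|Rem_φ a_i| - 1)`. Then `u` and `v` are singly-twisted conjugate, i.e.
`∃ z, v = φ(z) * u * z⁻¹`, if and only if such a `z` exists with
`|z| ≤ (|u| + |v|) / l`; so singly-twisted conjugacy is decided by finitely many checks. -/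
theorem singly_twisted_decision {n : ℕ} (hn : 0 < n)
    (φ : FreeGroup (Fin n) →* FreeGroup (Fin n))
    (hrem : HasRemnant fun i : Fin n => φ (FreeGroup.of i))
    (hgt : ∀ i : Fin n, 1 < remLen (fun j : Fin n => φ (FreeGroup.of j)) i)
    (l : ℕ)
    (hl : l = Finset.univ.inf'
      (⟨⟨0, hn⟩, Finset.mem_univ _⟩ : (Finset.univ : Finset (Fin n)).Nonempty)
      (fun i => remLen (fun j : Fin n => φ (FreeGroup.of j)) i - 1))
    (u v : FreeGroup (Fin n)) :
    (∃ z : FreeGroup (Fin n), v = φ z * u * z⁻¹) ↔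
      ∃ z : FreeGroup (Fin n),
        (FreeGroup.norm z : ℝ) ≤ (FreeGroup.norm u + FreeGroup.norm v) / l ∧
        v = φ z * u * z⁻¹ := by
  constructor
  · rintro ⟨z, hz⟩
    refine ⟨z, ?_, hz⟩
    have hl1 : ∀ i, l + 1 ≤ remLen (fun j : Fin n => φ (FreeGroup.of j)) i := by
      intro i
      have h1 : l ≤ remLen (fun j : Fin n => φ (FreeGroup.of j)) i - 1 := by
        rw [hl]
        exact Finset.inf'_le _ (Finset.mem_univ i)
      have := hgt i
      omega
    have hl0 : 0 < l := by
      rw [hl]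
      refine (Finset.lt_inf'_iff _).2 ?_
      intro i _
      have := hgt i
      omega
    have hb := norm_bound φ (l + 1) (Nat.succ_pos l) hl1 z
    have e : φ z = v * z * u⁻¹ := by rw [hz]; group
    have h1 := FreeGroup.norm_mul_le (v * z) u⁻¹
    have h2 := FreeGroup.norm_mul_le v z
    rw [FreeGroup.norm_inv_eq, ← e] at h1
    rw [le_div_iff₀ (by exact_mod_cast hl0)]
    have : z.norm * l ≤ u.norm + v.norm := by
      have : (l + 1) * z.norm = z.norm * l + z.norm := by ring
      omega
    exact_mod_cast this
  · rintro ⟨z, _, hz⟩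
    exact ⟨z, hz⟩
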